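/- Let K ∈ ℝ^{p×n} be such that A + BK is Hurwitz. Suppose there exists a C² proper positive definite function V: ℝ^n → ℝ≥0 such that, with P := (1/2)·H(V)(0): (i) P is positive definite and (A + BK)ᵀP + P(A + BK) is negative definite; and (ii) for every χ ∈ ℝ^n \ {0}, L_bV(χ) = 0 implies L_aV(χ) < 0. Then there exists a locally Lipschitz map α₀: ℝ^n → ℝ^p, differentiable at 0 with α₀(0) = 0 and Dα₀(0) = K, such that the origin of dχ/dt = a(χ) + b(χ)α₀(χ) is globally asymptotically stable; moreover α₀ can be chosen so that ∇V(χ)·(a(χ) + b(χ)α₀(χ)) < 0 for all χ ≠ 0. -/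

import Mathlib

open Matrix Filter Topology Asymptotics

noncomputable section

/-- `V` is proper: `V χ → ∞` as `‖χ‖ → ∞`. -/
def IsProper {E : Type*} [NormedAddCommGroup E] (V : E → ℝ) : Prop :=
  Filter.Tendsto V (Bornology.cobounded E) Filter.atTop

/-- `V` is positive definite: `V 0 = 0` and `V x > 0` for `x ≠ 0`. -/
def IsPosDefFn {E : Type*} [NormedAddCommGroup E] (V : E → ℝ) : Prop :=
  V 0 = 0 ∧ ∀ x : E, x ≠ 0 → 0 < V x

/-- The Hessian matrix of `V` at `x`. -/
def hessianAt {n : ℕ} (V : (Fin n → ℝ) → ℝ) (x : Fin n → ℝ) :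
    Matrix (Fin n) (Fin n) ℝ :=
  Matrix.of fun i j => iteratedFDeriv ℝ 2 V x ![Pi.single i 1, Pi.single j 1]

/-- A real square matrix is Hurwitz if all of its (complex) eigenvalues have
negative real part. -/
def Hurwitz {ι : Type*} [Fintype ι] [DecidableEq ι] (M : Matrix ι ι ℝ) : Prop :=
  ∀ μ : ℂ, μ ∈ spectrum ℂ (M.map (algebraMap ℝ ℂ)) → μ.re < 0

/-- Global asymptotic stability of the origin for `χ' = F (χ)`:
(i) Lyapunov stability of the origin, and (ii) for every initial condition there is a
solution defined on all of `[0, ∞)` converging to the origin (for a locally Lipschitz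
vector field, by uniqueness of solutions, this is equivalent to requiring every maximal
solution to be defined on `[0,∞)` and to converge to the origin). -/
def IsGAS {E : Type*} [NormedAddCommGroup E] [NormedSpace ℝ E] (F : E → E) : Prop :=
  (∀ ε > 0, ∃ δ > 0, ∀ (χ : ℝ → E) (T : ℝ),
      (∀ t ∈ Set.Ico (0:ℝ) T, HasDerivAt χ (F (χ t)) t) →
      ‖χ 0‖ ≤ δ → ∀ t ∈ Set.Ico (0:ℝ) T, ‖χ t‖ ≤ ε) ∧
  (∀ x₀ : E, ∃ χ : ℝ → E, χ 0 = x₀ ∧ (∀ t : ℝ, 0 ≤ t → HasDerivAt χ (F (χ t)) t) ∧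
      Filter.Tendsto χ Filter.atTop (nhds 0))

/-!
Near the origin the linear feedback `K` already makes `V` decrease: `∇V` and the closed-loop vector
field both vanish at `0`, so the derivative of `V` along the closed loop agrees to second order with
the quadratic form `x ↦ D²V(0)(x, (A + BK) x)`, which is negative definite. Away from the origin,
Artstein's condition provides at each point `x` a correction `u` with `∇V·(a + b (K x + u)) < 0`.
This inequality is affine in `u` and open in `x`, so a partition of unity glues locally constant
corrections into a smooth one, which may be taken to be `0` near the origin. For the resulting `C¹`
closed loop `V` is a strict proper Lyapunov function.
-/

open scoped ContDiff Manifold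

section Sublevel

variable {E : Type*} [NormedAddCommGroup E] {V : E → ℝ}

lemma IsPosDefFn.nonneg (hV : IsPosDefFn V) (x : E) : 0 ≤ V x := by
  rcases eq_or_ne x 0 with rfl | hx
  · exact hV.1.ge
  · exact (hV.2 x hx).le

lemma IsProper.isCompact_setOf_le [ProperSpace E] (hVp : IsProper V) (hV : Continuous V)
    (c : ℝ) : IsCompact {x | V x ≤ c} := by
  refine Metric.isCompact_of_isClosed_isBounded (isClosed_le hV continuous_const) ?_
  rw [← Bornology.isCobounded_compl_iff]
  filter_upwards [hVp.eventually_gt_atTop c] with x hx using not_le.mpr hx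

lemma IsProper.exists_pos_forall_norm_lt_of_lt [ProperSpace E] (hVp : IsProper V)
    (hV : Continuous V) (hVpos : IsPosDefFn V) {ε : ℝ} (hε : 0 < ε) :
    ∃ m > 0, ∀ x, V x < m → ‖x‖ < ε := by
  have hC : IsCompact ({x | V x ≤ 1} ∩ {x | ε ≤ ‖x‖}) :=
    (hVp.isCompact_setOf_le hV 1).inter_right (isClosed_le continuous_const continuous_norm)
  obtain ⟨m, hm, hmC⟩ := hC.exists_forall_le' hV.continuousOn (a := 0) fun x hx ↦
    hVpos.2 x (norm_pos_iff.mp (hε.trans_le hx.2))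
  refine ⟨min m 1, by positivity, fun x hx ↦ ?_⟩
  obtain ⟨hxm, hx1⟩ := lt_min_iff.mp hx
  by_contra! hεx
  exact hxm.not_ge (hmC x ⟨hx1.le, hεx⟩)

end Sublevel

section Lyapunov

variable {E : Type*} [NormedAddCommGroup E] [NormedSpace ℝ E] {F : E → E} {V : E → ℝ}

lemma exists_forall_hasDerivAt_of_hasCompactSupport [CompleteSpace E] (hF : ContDiff ℝ 1 F)
    (hFc : HasCompactSupport F) (x₀ : E) :
    ∃ χ : ℝ → E, χ 0 = x₀ ∧ ∀ t, HasDerivAt χ (F (χ t)) t := by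
  obtain ⟨K, hK⟩ := hF.lipschitzWith_of_hasCompactSupport hFc one_ne_zero
  obtain ⟨L, hL⟩ := hFc.exists_bound_of_continuous hF.continuous
  -- The existence time does not depend on the initial point, so local solutions concatenate.
  have exists_on_Ioo (x : E) : ∃ χ : ℝ → E, χ 0 = x ∧
      IsMIntegralCurveOn (I := 𝓘(ℝ, E)) χ F (Set.Ioo (-1) 1) := by
    have picard : IsPicardLindelof (fun _ ↦ F) (tmin := -1) (tmax := 1) ⟨0, by simp⟩ x
        L.toNNReal 0 L.toNNReal K :=
      .of_time_independent (fun y _ ↦ (hL y).trans (Real.le_coe_toNNReal L)) hK.lipschitzOnWith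
        (by simp)
    obtain ⟨χ, hχ0, hχ⟩ := picard.exists_eq_forall_mem_Icc_hasDerivWithinAt₀
    refine ⟨χ, hχ0, fun t ht ↦ HasFDerivWithinAt.hasMFDerivWithinAt ?_⟩
    exact ((hχ t (Set.Ioo_subset_Icc_self ht)).mono Set.Ioo_subset_Icc_self).hasFDerivWithinAt
  obtain ⟨χ, hχ0, hχ⟩ := exists_isMIntegralCurve_of_isMIntegralCurveOn
    (contMDiff_vectorSpace_iff_contDiff.mpr hF) one_pos exists_on_Ioo x₀
  exact ⟨χ, hχ0, fun t ↦ hasDerivAt_iff_hasFDerivAt.mpr (hχ t).hasFDerivAt⟩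

lemma antitoneOn_comp_of_fderiv_nonpos (hV : Differentiable ℝ V)
    (hVF : ∀ x, fderiv ℝ V x (F x) ≤ 0) {s : Set ℝ} (hs : Convex ℝ s) {χ : ℝ → E}
    (hχ : ∀ t ∈ s, HasDerivAt χ (F (χ t)) t) : AntitoneOn (V ∘ χ) s := by
  have hderiv : ∀ t ∈ s, HasDerivAt (V ∘ χ) (fderiv ℝ V (χ t) (F (χ t))) t := fun t ht ↦
    (hV (χ t)).hasFDerivAt.comp_hasDerivAt t (hχ t ht)
  exact antitoneOn_of_hasDerivWithinAt_nonpos hs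
    (fun t ht ↦ (hderiv t ht).continuousAt.continuousWithinAt)
    (fun t ht ↦ (hderiv t (interior_subset ht)).hasDerivWithinAt) fun t _ ↦ hVF (χ t)

lemma IsPosDefFn.fderiv_zero (hV : IsPosDefFn V) : fderiv ℝ V 0 = 0 :=
  IsLocalMin.fderiv_eq_zero <| Eventually.of_forall fun x ↦ hV.1.trans_le (hV.nonneg x)

lemma IsPosDefFn.fderiv_apply_nonpos (hV : IsPosDefFn V)
    (hVF : ∀ x ≠ 0, fderiv ℝ V x (F x) < 0) (x : E) : fderiv ℝ V x (F x) ≤ 0 := by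
  rcases eq_or_ne x 0 with rfl | hx
  · simp [hV.fderiv_zero]
  · exact (hVF x hx).le

lemma exists_forall_norm_le_of_fderiv_nonpos [ProperSpace E] (hV : Differentiable ℝ V)
    (hVp : IsProper V) (hVpos : IsPosDefFn V) (hVF : ∀ x, fderiv ℝ V x (F x) ≤ 0)
    {ε : ℝ} (hε : 0 < ε) :
    ∃ δ > 0, ∀ (χ : ℝ → E) (T : ℝ), (∀ t ∈ Set.Ico 0 T, HasDerivAt χ (F (χ t)) t) →
      ‖χ 0‖ ≤ δ → ∀ t ∈ Set.Ico 0 T, ‖χ t‖ ≤ ε := by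
  obtain ⟨m, hm, hmε⟩ := hVp.exists_pos_forall_norm_lt_of_lt hV.continuous hVpos hε
  have hVm : ∀ᶠ x in 𝓝 0, V x < m :=
    hV.continuous.continuousAt.eventually_lt_const (by rwa [hVpos.1])
  obtain ⟨δ, hδ, hδm⟩ := Metric.nhds_basis_closedBall.eventually_iff.mp hVm
  refine ⟨δ, hδ, fun χ T hχ hχ0 t ht ↦ (hmε _ ?_).le⟩
  calc V (χ t) ≤ V (χ 0) := antitoneOn_comp_of_fderiv_nonpos hV hVF (convex_Ico 0 T) hχ
        ⟨le_rfl, ht.1.trans_lt ht.2⟩ ht ht.1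
    _ < m := hδm (mem_closedBall_zero_iff.mpr hχ0)

lemma exists_forall_nonneg_hasDerivAt_of_fderiv_nonpos [FiniteDimensional ℝ E]
    (hF : ContDiff ℝ 1 F) (hV : Differentiable ℝ V) (hVp : IsProper V)
    (hVF : ∀ x, fderiv ℝ V x (F x) ≤ 0) (x₀ : E) :
    ∃ χ : ℝ → E, χ 0 = x₀ ∧ ∀ t ≥ 0, HasDerivAt χ (F (χ t)) t := by
  have : ProperSpace E := FiniteDimensional.proper ℝ E
  obtain ⟨R, hR, hVR⟩ :=
    (hVp.isCompact_setOf_le hV.continuous (V x₀)).isBounded.exists_pos_norm_le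
  -- Along the flow of `φ • F`, `V` still decreases, so the solution stays where `φ = 1`.
  let φ : ContDiffBump (0 : E) := ⟨R, R + 1, hR, lt_add_one R⟩
  obtain ⟨χ, hχ0, hχ⟩ := exists_forall_hasDerivAt_of_hasCompactSupport
    (φ.contDiff.smul hF) φ.hasCompactSupport.smul_right x₀
  have hVφF (x : E) : fderiv ℝ V x (φ x • F x) ≤ 0 := by
    rw [map_smul]
    exact smul_nonpos_of_nonneg_of_nonpos φ.nonneg (hVF x)
  refine ⟨χ, hχ0, fun t ht ↦ ?_⟩
  have hVχ : V (χ t) ≤ V x₀ := hχ0 ▸ antitoneOn_comp_of_fderiv_nonpos hV hVφF convex_univ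
    (fun t _ ↦ hχ t) (Set.mem_univ 0) (Set.mem_univ t) ht
  have hφ : φ (χ t) = 1 :=
    φ.one_of_mem_closedBall (mem_closedBall_zero_iff.mpr (hVR _ hVχ))
  simpa only [Pi.smul_apply', hφ, one_smul] using hχ t

lemma exists_nonneg_lt_of_hasDerivAt_le {f f' : ℝ → ℝ} {w : ℝ} (hw : w < 0)
    (hf : ∀ t ≥ 0, HasDerivAt f (f' t) t) (hf' : ∀ t ≥ 0, f' t ≤ w) (m : ℝ) :
    ∃ t ≥ 0, f t < m := by
  have hbound (t : ℝ) (ht : 0 ≤ t) : f t ≤ f 0 + w * t := by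
    have := (convex_Ici (0 : ℝ)).image_sub_le_mul_sub_of_deriv_le
      (fun s hs ↦ (hf s hs).continuousAt.continuousWithinAt)
      (fun s hs ↦ (hf s (interior_subset hs)).differentiableAt.differentiableWithinAt)
      (fun s hs ↦ (hf s (interior_subset hs)).deriv.trans_le (hf' s (interior_subset hs)))
      0 Set.self_mem_Ici t ht ht
    linarith
  have hlim : Tendsto (fun t ↦ f 0 + w * t) atTop atBot :=
    tendsto_atBot_add_const_left _ _ (tendsto_id.const_mul_atTop_of_neg hw)
  obtain ⟨t, ht, htm⟩ := ((eventually_ge_atTop 0).and (hlim.eventually_lt_atBot m)).exists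
  exact ⟨t, ht, (hbound t ht).trans_lt htm⟩

lemma tendsto_zero_of_fderiv_neg [ProperSpace E] (hF : Continuous F) (hV : ContDiff ℝ 1 V)
    (hVp : IsProper V) (hVpos : IsPosDefFn V) (hVF : ∀ x ≠ 0, fderiv ℝ V x (F x) < 0)
    {χ : ℝ → E} (hχ : ∀ t ≥ 0, HasDerivAt χ (F (χ t)) t) : Tendsto χ atTop (𝓝 0) := by
  have hVd : Differentiable ℝ V := hV.differentiable one_ne_zero
  have hanti : AntitoneOn (V ∘ χ) (Set.Ici 0) :=
    antitoneOn_comp_of_fderiv_nonpos hVd (hVpos.fderiv_apply_nonpos hVF) (convex_Ici 0) hχ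
  rw [Metric.tendsto_atTop]
  intro ε hε
  obtain ⟨m, hm, hmε⟩ := hVp.exists_pos_forall_norm_lt_of_lt hV.continuous hVpos hε
  suffices ∃ T ≥ 0, V (χ T) < m by
    obtain ⟨T, hT, hVT⟩ := this
    exact ⟨T, fun t ht ↦ by
      simpa using hmε _ ((hanti hT (hT.trans ht : (0 : ℝ) ≤ t) ht).trans_lt hVT)⟩
  by_contra! hmχ
  have hC : IsCompact ({x | V x ≤ V (χ 0)} ∩ {x | m ≤ V x}) :=
    (hVp.isCompact_setOf_le hV.continuous _).inter_right
      (isClosed_le continuous_const hV.continuous)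
  have hcont : Continuous fun x ↦ fderiv ℝ V x (F x) :=
    (hV.continuous_fderiv one_ne_zero).clm_apply hF
  obtain ⟨w, hw, hwC⟩ := hC.exists_forall_le' hcont.neg.continuousOn (a := 0) fun x hx ↦
    neg_pos.mpr <| hVF x <| by
      rintro rfl
      exact hm.not_ge (hVpos.1 ▸ hx.2)
  obtain ⟨t, ht, hVt⟩ := exists_nonneg_lt_of_hasDerivAt_le (neg_lt_zero.mpr hw)
    (fun t ht ↦ (hVd (χ t)).hasFDerivAt.comp_hasDerivAt t (hχ t ht))
    (fun t ht ↦ le_neg_of_le_neg (hwC _ ⟨hanti Set.self_mem_Ici ht ht, hmχ t ht⟩)) m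
  exact (hmχ t ht).not_gt hVt

theorem isGAS_of_fderiv_neg [FiniteDimensional ℝ E] (hF : ContDiff ℝ 1 F) (hV : ContDiff ℝ 1 V)
    (hVp : IsProper V) (hVpos : IsPosDefFn V) (hVF : ∀ x ≠ 0, fderiv ℝ V x (F x) < 0) :
    IsGAS F := by
  have : ProperSpace E := FiniteDimensional.proper ℝ E
  have hVd : Differentiable ℝ V := hV.differentiable one_ne_zero
  have hVF' := hVpos.fderiv_apply_nonpos hVF
  refine ⟨fun ε hε ↦ exists_forall_norm_le_of_fderiv_nonpos hVd hVp hVpos hVF' hε, fun x₀ ↦ ?_⟩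
  obtain ⟨χ, hχ0, hχ⟩ := exists_forall_nonneg_hasDerivAt_of_fderiv_nonpos hF hVd hVp hVF' x₀
  exact ⟨χ, hχ0, hχ, tendsto_zero_of_fderiv_neg hF.continuous hV hVp hVpos hVF hχ⟩

end Lyapunov

section Linearization

variable {E F : Type*} [NormedAddCommGroup E] [NormedSpace ℝ E] [NormedAddCommGroup F]
  [NormedSpace ℝ F]

lemma isCoercive_of_forall_pos [FiniteDimensional ℝ E] {B : E →L[ℝ] E →L[ℝ] ℝ}
    (hB : ∀ x ≠ 0, 0 < B x x) : IsCoercive B := by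
  have : ProperSpace E := FiniteDimensional.proper ℝ E
  have hcont : Continuous fun x ↦ B x x := B.continuous.clm_apply continuous_id
  obtain ⟨c, hc, hcB⟩ := (isCompact_sphere (0 : E) 1).exists_forall_le' hcont.continuousOn
    (a := 0) fun x hx ↦ hB x (ne_zero_of_mem_unit_sphere ⟨x, hx⟩)
  refine ⟨c, hc, fun x ↦ ?_⟩
  rcases eq_or_ne x 0 with rfl | hx
  · simp
  have hunit : ‖x‖⁻¹ • x ∈ Metric.sphere (0 : E) 1 := by simp [norm_smul, hx]
  calc c * ‖x‖ * ‖x‖ ≤ B (‖x‖⁻¹ • x) (‖x‖⁻¹ • x) * ‖x‖ * ‖x‖ := by gcongr; exact hcB _ hunit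
    _ = B x x := by
      have : ‖x‖ ≠ 0 := norm_ne_zero_iff.mpr hx
      simp only [map_smul, _root_.smul_apply, smul_eq_mul]
      field_simp

lemma isLittleO_apply_sub_apply {W : Type*} [NormedAddCommGroup W] [NormedSpace ℝ W]
    {D : E → F →L[ℝ] W} {H : E →L[ℝ] F →L[ℝ] W} {G : E → F} {M : E →L[ℝ] F}
    (hD : HasFDerivAt D H 0) (hD0 : D 0 = 0) (hG : HasFDerivAt G M 0) (hG0 : G 0 = 0) :
    (fun x ↦ D x (G x) - H x (M x)) =o[𝓝 0] fun x ↦ ‖x‖ * ‖x‖ := by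
  have hDH : (fun x ↦ D x - H x) =o[𝓝 0] fun x ↦ x := by simpa [hD0] using hD.isLittleO
  have hGM : (fun x ↦ G x - M x) =o[𝓝 0] fun x ↦ x := by simpa [hG0] using hG.isLittleO
  have hGO : G =O[𝓝 0] fun x ↦ x := by simpa [hG0] using hG.isBigO_sub
  have hDsub : (fun x ↦ (D x - H x) (G x)) =o[𝓝 0] fun x ↦ ‖x‖ * ‖x‖ :=
    (isBoundedBilinearMap_apply.isBigO_comp (g := fun x ↦ D x - H x) (h := G)).trans_isLittleO
      (hDH.norm_norm.mul_isBigO hGO.norm_norm)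
  have hGsub : (fun x ↦ H x (G x - M x)) =o[𝓝 0] fun x ↦ ‖x‖ * ‖x‖ :=
    (isBoundedBilinearMap_apply.isBigO_comp (g := H) (h := fun x ↦ G x - M x)).trans_isLittleO
      ((H.isBigO_id _).norm_norm.mul_isLittleO hGM.norm_norm)
  refine (hDsub.add hGsub).congr_left fun x ↦ ?_
  simp

lemma eventually_apply_neg_of_hasFDerivAt [FiniteDimensional ℝ E] {D : E → F →L[ℝ] ℝ}
    {H : E →L[ℝ] F →L[ℝ] ℝ} {G : E → F} {M : E →L[ℝ] F} (hD : HasFDerivAt D H 0)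
    (hD0 : D 0 = 0) (hG : HasFDerivAt G M 0) (hG0 : G 0 = 0)
    (hHM : ∀ x ≠ 0, H x (M x) < 0) : ∀ᶠ x in 𝓝[≠] 0, D x (G x) < 0 := by
  obtain ⟨c, hc, hcoer⟩ : IsCoercive (-(H.bilinearComp (.id ℝ E) M)) :=
    isCoercive_of_forall_pos fun x hx ↦ by simpa using hHM x hx
  have hsmall := (isLittleO_apply_sub_apply hD hD0 hG hG0).def (half_pos hc)
  filter_upwards [hsmall.filter_mono nhdsWithin_le_nhds, self_mem_nhdsWithin] with x hx hx0
  have hnorm : 0 < ‖x‖ * ‖x‖ := by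
    have := norm_pos_iff.mpr hx0
    positivity
  have hquad : c * ‖x‖ * ‖x‖ ≤ -H x (M x) := by simpa using hcoer x
  rw [Real.norm_eq_abs, Real.norm_of_nonneg hnorm.le] at hx
  nlinarith [le_abs_self (D x (G x) - H x (M x))]

end Linearization

section Selection

variable {U : Type*} [NormedAddCommGroup U] [NormedSpace ℝ U]

lemma exists_eventually_add_apply_neg {X : Type*} [TopologicalSpace X] {g : X → ℝ}
    {ℓ : X → U →L[ℝ] ℝ} {x : X} (hg : ContinuousAt g x) (hℓ : ContinuousAt ℓ x)
    (hx : ℓ x = 0 → g x < 0) : ∃ c : U, ∀ᶠ y in 𝓝 x, g y + ℓ y c < 0 := by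
  suffices ∃ c : U, g x + ℓ x c < 0 by
    obtain ⟨c, hc⟩ := this
    exact ⟨c, (hg.add (hℓ.clm_apply continuousAt_const)).eventually_lt_const hc⟩
  by_cases hℓx : ℓ x = 0
  · exact ⟨0, by simpa using hx hℓx⟩
  · have hsurj : Function.Surjective (ℓ x) :=
      LinearMap.surjective_of_ne_zero (ContinuousLinearMap.coe_injective.ne hℓx)
    obtain ⟨c, hc⟩ := hsurj (-g x - 1)
    exact ⟨c, by linarith⟩

lemma convex_setOf_add_apply_neg (r : ℝ) (ℓ : U →L[ℝ] ℝ) : Convex ℝ {c : U | r + ℓ c < 0} := by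
  simpa only [← lt_neg_iff_add_neg'] using
    convex_halfSpace_lt (f := ℓ) ℓ.toLinearMap.isLinear (-r)

theorem exists_contDiff_forall_add_apply_neg {E : Type*} [NormedAddCommGroup E]
    [NormedSpace ℝ E] [FiniteDimensional ℝ E] {g : E → ℝ} {ℓ : E → U →L[ℝ] ℝ} {x₀ : E}
    (hg : Continuous g) (hℓ : Continuous ℓ) (hloc : ∀ᶠ x in 𝓝[≠] x₀, g x < 0)
    (hker : ∀ x ≠ x₀, ℓ x = 0 → g x < 0) :
    ∃ u : E → U, ContDiff ℝ ∞ u ∧ u =ᶠ[𝓝 x₀] 0 ∧ ∀ x ≠ x₀, g x + ℓ x (u x) < 0 := by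
  obtain ⟨r, hr, hgr⟩ := Metric.eventually_nhds_iff_ball.mp (eventually_nhdsWithin_iff.mp hloc)
  let t (x : E) : Set U := {c | (x ∈ Metric.closedBall x₀ (r / 2) → c = 0) ∧
    (x ≠ x₀ → g x + ℓ x c < 0)}
  have hconvex (x : E) : Convex ℝ (t x) := fun c hc d hd s s' hs hs' hss' ↦
    ⟨fun hx ↦ by simp [hc.1 hx, hd.1 hx], fun hx ↦
      convex_setOf_add_apply_neg (g x) (ℓ x) (hc.2 hx) (hd.2 hx) hs hs' hss'⟩
  have hlocconst (x : E) : ∃ c, ∀ᶠ y in 𝓝 x, c ∈ t y := by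
    by_cases hx : x ∈ Metric.ball x₀ r
    · refine ⟨0, ?_⟩
      filter_upwards [Metric.isOpen_ball.mem_nhds hx] with y hy
      exact ⟨fun _ ↦ rfl, fun hy0 ↦ by simpa using hgr y hy hy0⟩
    · have hx0 : x ≠ x₀ := fun h ↦ hx (h ▸ Metric.mem_ball_self hr)
      have hxfar : x ∉ Metric.closedBall x₀ (r / 2) := fun h ↦
        hx (Metric.closedBall_subset_ball (half_lt_self hr) h)
      obtain ⟨c, hc⟩ :=
        exists_eventually_add_apply_neg hg.continuousAt hℓ.continuousAt (hker x hx0)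
      refine ⟨c, ?_⟩
      filter_upwards [hc, Metric.isClosed_closedBall.isOpen_compl.mem_nhds hxfar] with y hyc hyfar
      exact ⟨fun hy ↦ absurd hy hyfar, fun _ ↦ hyc⟩
  obtain ⟨u, hu⟩ := exists_contMDiffMap_forall_mem_convex_of_local_const (n := ⊤) 𝓘(ℝ, E)
    hconvex hlocconst
  refine ⟨u, u.contMDiff.contDiff, ?_, fun x ↦ (hu x).2⟩
  filter_upwards [Metric.closedBall_mem_nhds x₀ (half_pos hr)] with x using (hu x).1

end Selection

section Coordinates

variable {n : ℕ}

lemma fderiv_fderiv_apply_eq_dotProduct_hessianAt (V : (Fin n → ℝ) → ℝ) (x v w : Fin n → ℝ) :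
    fderiv ℝ (fderiv ℝ V) x v w = v ⬝ᵥ hessianAt V x *ᵥ w := by
  let B : LinearMap.BilinForm ℝ (Fin n → ℝ) := (fderiv ℝ (fderiv ℝ V) x).toLinearMap₁₂
  have hB : LinearMap.toMatrix₂' ℝ B = hessianAt V x := by
    ext i j
    simp [B, hessianAt, iteratedFDeriv_two_apply, LinearMap.toMatrix₂'_apply]
  rw [← hB, ← Matrix.toLinearMap₂'_apply', Matrix.toLinearMap₂'_toMatrix']
  rfl

lemma dotProduct_mulVec_mulVec_neg_of_lyapunov {ι : Type*} [Fintype ι] {P M : Matrix ι ι ℝ}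
    (hP : P.IsHermitian) (hPM : (-(Mᵀ * P + P * M)).PosDef) {x : ι → ℝ} (hx : x ≠ 0) :
    x ⬝ᵥ P *ᵥ M *ᵥ x < 0 := by
  have hPt : Pᵀ = P := by simpa using hP.eq
  have hsymm : x ⬝ᵥ (Mᵀ * P) *ᵥ x = x ⬝ᵥ (P * M) *ᵥ x := by
    have htranspose : Mᵀ * P = (P * M)ᵀ := by rw [transpose_mul, hPt]
    rw [htranspose, mulVec_transpose, dotProduct_comm, dotProduct_mulVec]
  have hpos : 0 < x ⬝ᵥ -(Mᵀ * P + P * M) *ᵥ x := hPM.dotProduct_mulVec_pos hx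
  rw [neg_mulVec, dotProduct_neg, add_mulVec, dotProduct_add, hsymm] at hpos
  rw [mulVec_mulVec]
  linarith

lemma fderiv_fderiv_apply_mulVec_neg_of_lyapunov {V : (Fin n → ℝ) → ℝ}
    {x : Fin n → ℝ} {M : Matrix (Fin n) (Fin n) ℝ}
    (hP : ((1 / 2 : ℝ) • hessianAt V x).IsHermitian)
    (hPM : (-(Mᵀ * ((1 / 2 : ℝ) • hessianAt V x) + ((1 / 2 : ℝ) • hessianAt V x) * M)).PosDef)
    {v : Fin n → ℝ} (hv : v ≠ 0) : fderiv ℝ (fderiv ℝ V) x v (M *ᵥ v) < 0 := by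
  have hneg := dotProduct_mulVec_mulVec_neg_of_lyapunov hP hPM hv
  rw [smul_mulVec, dotProduct_smul, smul_eq_mul] at hneg
  rw [fderiv_fderiv_apply_eq_dotProduct_hessianAt]
  linarith

lemma contDiff_mulVecLin_of {E ι κ : Type*} [NormedAddCommGroup E] [NormedSpace ℝ E]
    [Fintype ι] [Fintype κ] {b : E → ι → κ → ℝ} {k : WithTop ℕ∞} (hb : ContDiff ℝ k b) :
    ContDiff ℝ k fun x ↦ (Matrix.of (b x)).mulVecLin.toContinuousLinearMap := by
  refine contDiff_clm_apply_iff.mpr fun u ↦ contDiff_pi.mpr fun i ↦ ?_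
  exact ContDiff.sum fun j _ ↦ (contDiff_pi.mp (contDiff_pi.mp hb i) j).mul contDiff_const

end Coordinates

theorem stmt1_general {E U : Type*} [NormedAddCommGroup E] [NormedSpace ℝ E]
    [FiniteDimensional ℝ E] [NormedAddCommGroup U] [NormedSpace ℝ U] {a : E → E}
    {b : E → U →L[ℝ] E} {K : E →L[ℝ] U} {V : E → ℝ} (ha : ContDiff ℝ 1 a) (ha0 : a 0 = 0)
    (hb : ContDiff ℝ 1 b) (hV : ContDiff ℝ 1 V) (hV' : DifferentiableAt ℝ (fderiv ℝ V) 0)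
    (hVproper : IsProper V) (hVpos : IsPosDefFn V)
    (hLyap : ∀ x ≠ 0, fderiv ℝ (fderiv ℝ V) 0 x (fderiv ℝ a 0 x + b 0 (K x)) < 0)
    (hArtstein : ∀ x ≠ 0, (∀ u, fderiv ℝ V x (b x u) = 0) → fderiv ℝ V x (a x) < 0) :
    ∃ α : E → U, ContDiff ℝ ∞ α ∧ α =ᶠ[𝓝 0] K ∧ IsGAS (fun x ↦ a x + b x (α x)) ∧
      ∀ x ≠ 0, fderiv ℝ V x (a x + b x (α x)) < 0 := by
  have hDV : Continuous (fderiv ℝ V) := hV.continuous_fderiv one_ne_zero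
  have hderiv : HasFDerivAt (fun x ↦ a x + b x (K x)) (fderiv ℝ a 0 + b 0 ∘L K) 0 := by
    have hbK := (hb.differentiable one_ne_zero 0).hasFDerivAt.clm_apply K.hasFDerivAt
    simpa using (ha.differentiable one_ne_zero 0).hasFDerivAt.fun_add hbK
  have hlocal : ∀ᶠ x in 𝓝[≠] 0, fderiv ℝ V x (a x + b x (K x)) < 0 :=
    eventually_apply_neg_of_hasFDerivAt hV'.hasFDerivAt hVpos.fderiv_zero hderiv
      (by simp [ha0]) hLyap
  obtain ⟨u, hu, hu0, huneg⟩ := exists_contDiff_forall_add_apply_neg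
    (g := fun x ↦ fderiv ℝ V x (a x + b x (K x))) (ℓ := fun x ↦ fderiv ℝ V x ∘L b x)
    (hDV.clm_apply (ha.continuous.add (hb.continuous.clm_apply K.continuous)))
    (hDV.clm_comp hb.continuous) hlocal fun x hx hker ↦ by
      have hker' (v : U) : fderiv ℝ V x (b x v) = 0 := DFunLike.congr_fun hker v
      simpa [hker'] using hArtstein x hx hker'
  have hα : ContDiff ℝ ∞ fun x ↦ K x + u x := K.contDiff.add hu
  have hneg : ∀ x ≠ 0, fderiv ℝ V x (a x + b x (K x + u x)) < 0 := fun x hx ↦ by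
    simpa [add_assoc] using huneg x hx
  have hF : ContDiff ℝ 1 fun x ↦ a x + b x (K x + u x) :=
    ha.add (hb.clm_apply (hα.of_le (mod_cast le_top)))
  refine ⟨fun x ↦ K x + u x, hα, ?_, isGAS_of_fderiv_neg hF hV hVproper hVpos hneg, hneg⟩
  filter_upwards [hu0] with x hx
  simp [hx]

/-- If there is a `C²` proper positive definite function `V` such that,
with `P := ½ H(V)(0)`, `P` is positive definite, `(A+BK)ᵀP + P(A+BK)` is negative
definite (with `A + BK` Hurwitz), and the Artstein condition holds, then there exists a
locally Lipschitz feedback `α₀`, differentiable at `0` with `α₀ 0 = 0` and `Dα₀(0) = K`,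
which globally asymptotically stabilizes the origin and makes `V` strictly decrease. -/
theorem stmt1 {n p : ℕ}
    (a : (Fin n → ℝ) → (Fin n → ℝ)) (b : (Fin n → ℝ) → Fin n → Fin p → ℝ)
    (A : Matrix (Fin n) (Fin n) ℝ) (B : Matrix (Fin n) (Fin p) ℝ)
    (K : Matrix (Fin p) (Fin n) ℝ)
    (ha : ContDiff ℝ 1 a) (ha0 : a 0 = 0)
    (hA : ∀ v, fderiv ℝ a 0 v = A.mulVec v)
    (hb : ContDiff ℝ 1 b) (hB : B = Matrix.of (b 0))
    (hHurwitz : Hurwitz (A + B * K))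
    (V : (Fin n → ℝ) → ℝ)
    (hV : ContDiff ℝ 2 V) (hVnonneg : ∀ χ, 0 ≤ V χ)
    (hVproper : IsProper V) (hVpos : IsPosDefFn V)
    (hP : (((1:ℝ)/2) • hessianAt V 0).PosDef)
    (hLyap : (-((A + B * K)ᵀ * (((1:ℝ)/2) • hessianAt V 0)
        + (((1:ℝ)/2) • hessianAt V 0) * (A + B * K))).PosDef)
    (hArtstein : ∀ χ : Fin n → ℝ, χ ≠ 0 →
        (∀ i, fderiv ℝ V χ (fun k => b χ k i) = 0) → fderiv ℝ V χ (a χ) < 0) :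
    ∃ α₀ : (Fin n → ℝ) → (Fin p → ℝ), LocallyLipschitz α₀ ∧
      DifferentiableAt ℝ α₀ 0 ∧ α₀ 0 = 0 ∧ (∀ v, fderiv ℝ α₀ 0 v = K.mulVec v) ∧
      IsGAS (fun χ => a χ + (Matrix.of (b χ)).mulVec (α₀ χ)) ∧
      (∀ χ : Fin n → ℝ, χ ≠ 0 →
        fderiv ℝ V χ (a χ + (Matrix.of (b χ)).mulVec (α₀ χ)) < 0) := by
  obtain ⟨α, hα, hαK, hGAS, hneg⟩ := stmt1_general (K := K.mulVecLin.toContinuousLinearMap)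
    ha ha0 (contDiff_mulVecLin_of hb) (hV.of_le one_le_two)
    ((hV.fderiv_right (m := 1) one_add_one_eq_two.le).differentiable one_ne_zero 0)
    hVproper hVpos
    (fun x hx ↦ by
      simpa [hA, hB, add_mulVec, mulVec_mulVec] using
        fderiv_fderiv_apply_mulVec_neg_of_lyapunov hP.isHermitian hLyap hx)
    (fun x hx hbV ↦ hArtstein x hx fun i ↦
      (congrArg (fderiv ℝ V x) (mulVec_single_one _ i).symm).trans (hbV (Pi.single i 1)))
  exact ⟨α, (hα.of_le (mod_cast le_top)).locallyLipschitz, hα.differentiable (by simp) 0,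
    by simpa using hαK.eq_of_nhds, fun v ↦ by rw [hαK.fderiv_eq, ContinuousLinearMap.fderiv]; rfl,
    hGAS, hneg⟩
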